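/- arXiv:0803.1276 — 2 statements merged into one kernel-verified Lean document; each statement's English description precedes it below -/
import Mathlib

section
/- For |z| < 1 and γ not a nonpositive integer, the Euler transformation holds: F(α,β;γ;z) = (1-z)^{γ-α-β} F(γ-α, γ-β; γ; z). -/
open Real Filter MeasureTheory

/-- The Gauss hypergeometric function `F(α, β; γ; z)`, defined by its power series. -/
noncomputable def hypF (α β γ z : ℝ) : ℝ :=
  ∑' i : ℕ, ((ascPochhammer ℝ i).eval α * (ascPochhammer ℝ i).eval β /
      (ascPochhammer ℝ i).eval γ) * z ^ i / (Nat.factorial i)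

lemma poch_succ (a : ℝ) (n : ℕ) :
    (ascPochhammer ℝ (n+1)).eval a = (ascPochhammer ℝ n).eval a * (a + n) := by
  simp [ascPochhammer_succ_right, Polynomial.eval_mul]

lemma poch_ne (c : ℝ) (hc : ∀ m : ℕ, c ≠ -(m : ℝ)) (n : ℕ) :
    (ascPochhammer ℝ n).eval c ≠ 0 := by
  induction n with
  | zero => simp
  | succ n ih =>
    rw [poch_succ]
    refine mul_ne_zero ih fun h => hc n (by linarith)

noncomputable def pC (s : ℝ) (n : ℕ) : ℝ := (ascPochhammer ℝ n).eval s / n.factorial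

noncomputable def uC (a b c : ℝ) (n : ℕ) : ℝ :=
  (ascPochhammer ℝ n).eval a * (ascPochhammer ℝ n).eval b / (ascPochhammer ℝ n).eval c / n.factorial

lemma pC_succ (s : ℝ) (n : ℕ) : ((n : ℝ) + 1) * pC s (n+1) = (s + n) * pC s n := by
  have h1 : (n.factorial : ℝ) ≠ 0 := by positivity
  have h2 : (n : ℝ) + 1 ≠ 0 := by positivity
  unfold pC
  rw [poch_succ, Nat.factorial_succ]
  push_cast
  field_simp

lemma uC_succ (a b c : ℝ) (hc : ∀ m : ℕ, c ≠ -(m : ℝ)) (n : ℕ) :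
    ((n : ℝ) + 1) * (c + n) * uC a b c (n+1) = (a + n) * (b + n) * uC a b c n := by
  have h1 : (n.factorial : ℝ) ≠ 0 := by positivity
  have h2 : (n : ℝ) + 1 ≠ 0 := by positivity
  have h3 := poch_ne c hc n
  have h4 : c + n ≠ 0 := fun h => hc n (by linarith)
  unfold uC
  rw [poch_succ, poch_succ, poch_succ, Nat.factorial_succ]
  push_cast
  field_simp

/-- Pfaff–Saalschütz -/
lemma saal (a b c : ℝ) (hc : ∀ m : ℕ, c ≠ -(m : ℝ)) (n : ℕ) :
    ∑ k ∈ Finset.range (n+1), uC a b c k * pC (c - a - b) (n - k) = uC (c - a) (c - b) c n := by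
  induction n with
  | zero => simp [uC, pC]
  | succ n ih =>
    have h2 : (n : ℝ) + 1 ≠ 0 := by positivity
    have h4 : c + n ≠ 0 := fun h => hc n (by linarith)
    apply mul_left_cancel₀ (mul_ne_zero h2 h4)
    rw [uC_succ _ _ _ hc, ← ih, Finset.sum_range_succ, mul_add]
    set G : ℕ → ℝ := fun k => k * (c + k - 1) * uC a b c k * pC (c - a - b) (n + 1 - k) with hG
    have key : ∀ k ∈ Finset.range (n+1),
        ((n : ℝ) + 1) * (c + n) * (uC a b c k * pC (c - a - b) (n + 1 - k))
          - (c - a + n) * (c - b + n) * (uC a b c k * pC (c - a - b) (n - k))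
          = - (G (k+1) - G k) := by
      intro k hk
      obtain ⟨j, rfl⟩ : ∃ j, n = k + j := ⟨n - k, by
        have := Finset.mem_range.1 hk; omega⟩
      have e1 : k + j + 1 - k = j + 1 := by omega
      have e2 : k + j - k = j := by omega
      have e3 : k + j + 1 - (k + 1) = j := by omega
      have hj : (j : ℝ) + 1 ≠ 0 := by positivity
      simp only [hG, e1, e2, e3]
      have hp := pC_succ (c - a - b) j
      have hu := uC_succ a b c hc k
      push_cast
      have hu' : ((k : ℝ) + 1) * (c + (k + 1) - 1) * uC a b c (k+1)
        = (a + k) * (b + k) * uC a b c k := by rw [← hu]; ring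
      rw [hu']
      apply mul_left_cancel₀ hj
      linear_combination (uC a b c k * (((k:ℝ) + j + 1) * (c + (k + j)) - k * (c + k - 1))) * hp
    have hs := Finset.sum_congr rfl key
    rw [Finset.sum_sub_distrib, ← Finset.mul_sum, ← Finset.mul_sum, Finset.sum_neg_distrib,
      Finset.sum_range_sub] at hs
    have g0 : G 0 = 0 := by simp [hG]
    have g1 : G (n+1) = ((n : ℝ) + 1) * (c + n)
        * (uC a b c (n+1) * pC (c - a - b) (n + 1 - (n + 1))) := by
      simp only [hG]; push_cast; ring
    rw [g0, g1] at hs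
    linarith

lemma mem_ball_of (z : ℝ) (hz : |z| < 1) : z ∈ Metric.eball (0 : ℝ) 1 := by
  rw [← ENNReal.ofReal_one, Metric.eball_ofReal]
  simpa using hz

lemma radius_ge (a b c : ℝ) : 1 ≤ (ordinaryHypergeometricSeries ℝ a b c).radius := by
  by_cases ha : ∃ k : ℕ, a = -(k : ℝ)
  · obtain ⟨k, rfl⟩ := ha
    simp [ordinaryHypergeometric_radius_top_of_neg_nat₁]
  by_cases hb : ∃ k : ℕ, b = -(k : ℝ)
  · obtain ⟨k, rfl⟩ := hb
    simp [ordinaryHypergeometric_radius_top_of_neg_nat₂]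
  by_cases hc : ∃ k : ℕ, c = -(k : ℝ)
  · obtain ⟨k, rfl⟩ := hc
    simp [ordinaryHypergeometric_radius_top_of_neg_nat₃]
  push Not at ha hb hc
  refine (ordinaryHypergeometricSeries_radius_eq_one _ _ _ _ fun k => ⟨?_, ?_, ?_⟩).ge
  · exact fun h => ha k (by linarith)
  · exact fun h => hb k (by linarith)
  · exact fun h => hc k (by linarith)

lemma u_summable (a b c z : ℝ) (hz : |z| < 1) : Summable fun n => ‖uC a b c n * z ^ n‖ := by
  have h := (ordinaryHypergeometricSeries ℝ a b c).summable_norm_apply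
    (x := z) (Metric.eball_subset_eball (radius_ge a b c) (mem_ball_of z hz))
  refine h.congr fun n => ?_
  rw [ordinaryHypergeometricSeries_apply_eq, uC, smul_eq_mul]
  congr 2
  simp only [div_eq_mul_inv]
  ring

lemma choose_eq (s : ℝ) (n : ℕ) : Ring.choose (s + n - 1) n = pC s n := by
  have h1 : (n.factorial : ℝ) ≠ 0 := by positivity
  rw [pC, eq_div_iff h1, Ring.choose, show s + n - 1 - n + 1 = s by ring,
    ← Polynomial.ascPochhammer_smeval_eq_eval, ← Ring.factorial_nsmul_multichoose_eq_ascPochhammer,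
    nsmul_eq_mul, mul_comm]

lemma p_summable (s z : ℝ) (hz : |z| < 1) :
    (Summable fun n => ‖pC s n * z ^ n‖) ∧ ∑' n, pC s n * z ^ n = 1 / (1 - z) ^ s := by
  have h := Real.one_div_one_sub_rpow_hasFPowerSeriesOnBall_zero s
  have e : ∀ n : ℕ, (FormalMultilinearSeries.ofScalars ℝ
      fun n : ℕ ↦ Ring.choose (s + n - 1) n) n (fun _ => z) = pC s n * z ^ n := by
    intro n
    rw [FormalMultilinearSeries.ofScalars_apply_eq, choose_eq, smul_eq_mul]
  constructor
  · have h' := FormalMultilinearSeries.summable_norm_apply _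
      (Metric.eball_subset_eball h.r_le (mem_ball_of z hz))
    exact h'.congr fun n => by rw [e]
  · have h' := (h.hasSum (mem_ball_of z hz)).tsum_eq
    simp only [e, zero_add] at h'
    exact h'

lemma hypF_eq (a b c z : ℝ) : hypF a b c z = ∑' n, uC a b c n * z ^ n := by
  unfold hypF uC
  exact tsum_congr fun n => by ring

theorem stmt_5 (α β γ z : ℝ) (hz : |z| < 1) (hγ : ∀ m : ℕ, γ ≠ -(m : ℝ)) :
    hypF α β γ z = (1 - z) ^ (γ - α - β) * hypF (γ - α) (γ - β) γ z := by
  have hz1 : 0 ≤ 1 - z := by have := (abs_lt.1 hz).2; linarith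
  set s := γ - (γ - α) - (γ - β) with hs
  obtain ⟨h1, h2⟩ := p_summable s z hz
  have h3 : (1 - z) ^ (γ - α - β) = 1 / (1 - z) ^ s := by
    rw [one_div, ← Real.rpow_neg hz1]; congr 1; rw [hs]; ring
  rw [h3, ← h2, hypF_eq, hypF_eq, mul_comm,
    tsum_mul_tsum_eq_tsum_sum_range_of_summable_norm (u_summable _ _ _ z hz) h1]
  refine tsum_congr fun n => ?_
  have := saal (γ - α) (γ - β) γ hγ n
  rw [sub_sub_cancel, sub_sub_cancel] at this
  rw [← this, Finset.sum_mul]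
  refine Finset.sum_congr rfl fun k hk => ?_
  have hk' : n = k + (n - k) := by have := Finset.mem_range.1 hk; omega
  have hp : z ^ n = z ^ k * z ^ (n - k) := by rw [← pow_add, ← hk']
  have hs' : β - (γ - α) = α - (γ - β) := by ring
  rw [hp]
  simp only [hs, sub_sub_cancel]
  ring
end

section
/- Assume e > -p/2 - n/2 - 1, -p/2 - 1 < a < n/2 + e, and -1 < b < min(n/2+e-a-1, 0). Then for all w > 0, w·φ'(w)/φ(w) ≥ (p/2 + a + 2)·b/(b+1). -/
open Real Filter MeasureTheory

noncomputable def KK (b α c w x : ℝ) : ℝ := x ^ α * (1 - x) ^ b * (1 + w * x) ^ (-c)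

noncomputable def JJ (b α c w : ℝ) : ℝ := ∫ x in (0:ℝ)..1, KK b α c w x

lemma int_congr {f g : ℝ → ℝ} (h : ∀ x ∈ Set.Ioo (0:ℝ) 1, f x = g x) :
    ∫ x in (0:ℝ)..1, f x = ∫ x in (0:ℝ)..1, g x := by
  rw [intervalIntegral.integral_of_le zero_le_one, intervalIntegral.integral_of_le zero_le_one,
    integral_Ioc_eq_integral_Ioo, integral_Ioc_eq_integral_Ioo]
  exact setIntegral_congr_fun measurableSet_Ioo h

lemma ii_congr {f g : ℝ → ℝ} (h : ∀ x ∈ Set.Ioo (0:ℝ) 1, f x = g x)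
    (hf : IntervalIntegrable f volume 0 1) : IntervalIntegrable g volume 0 1 := by
  rw [intervalIntegrable_iff_integrableOn_Ioo_of_le zero_le_one] at hf ⊢
  exact hf.congr_fun h measurableSet_Ioo

lemma base_ii {α b : ℝ} (hα : -1 < α) (hb : -1 < b) :
    IntervalIntegrable (fun x : ℝ => x ^ α * (1 - x) ^ b) volume 0 1 := by
  have key : ∀ u v : ℝ, -1 < u →
      IntervalIntegrable (fun x : ℝ => x ^ u * (1 - x) ^ v) volume 0 (1/2) := by
    intro u v hu
    apply IntervalIntegrable.mul_continuousOn
    · exact intervalIntegral.intervalIntegrable_rpow' hu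
    · intro x hx
      rw [Set.uIcc_of_le (by norm_num)] at hx
      apply ContinuousAt.continuousWithinAt
      apply ContinuousAt.rpow_const (by fun_prop)
      left; linarith [hx.2]
  refine (key α b hα).trans ?_
  have := (key b α hb).comp_sub_left 1
  norm_num at this
  refine this.symm.congr ?_
  intro x _
  simp [mul_comm]

lemma gcont {w : ℝ} (hw : 0 < w) (c : ℝ) :
    ContinuousOn (fun x : ℝ => (1 + w * x) ^ (-c)) (Set.Icc 0 1) := by
  intro x hx
  apply ContinuousAt.continuousWithinAt
  apply ContinuousAt.rpow_const (by fun_prop)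
  left
  have := mul_nonneg hw.le hx.1
  linarith

lemma KK_ii {α b w : ℝ} (hα : -1 < α) (hb : -1 < b) (hw : 0 < w) (c : ℝ) :
    IntervalIntegrable (KK b α c w) volume 0 1 := by
  apply (base_ii hα hb).mul_continuousOn
  rw [Set.uIcc_of_le zero_le_one]
  exact gcont hw c

lemma KK_pos {α b w x : ℝ} (hw : 0 < w) (c : ℝ) (hx : x ∈ Set.Ioo (0:ℝ) 1) :
    0 < KK b α c w x := by
  have h1 := hx.1
  have h2 : 0 < 1 - x := by linarith [hx.2]
  unfold KK
  positivity

lemma JJ_pos {α b w : ℝ} (hα : -1 < α) (hb : -1 < b) (hw : 0 < w) (c : ℝ) :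
    0 < JJ b α c w :=
  intervalIntegral.intervalIntegral_pos_of_pos_on (KK_ii hα hb hw c)
    (fun _ hx => KK_pos hw c hx) zero_lt_one

lemma JJ_le {α b w : ℝ} (hα : -1 < α) (hb : -1 < b) (hw : 0 < w) (c : ℝ) :
    JJ b (α + 1) c w ≤ JJ b α c w := by
  apply intervalIntegral.integral_mono_on_of_le_Ioo zero_le_one
    (KK_ii (by linarith) hb hw c) (KK_ii hα hb hw c)
  intro x hx
  have h := (KK_pos (b := b) (α := α) hw c hx).le
  have : KK b (α + 1) c w x = KK b α c w x * x := by
    unfold KK; rw [Real.rpow_add_one hx.1.ne']; ring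
  rw [this]
  exact mul_le_of_le_one_right h hx.2.le

lemma gderiv {w x : ℝ} (hw : 0 < w) (hx : 0 ≤ x) (c : ℝ) :
    HasDerivAt (fun x : ℝ => (1 + w * x) ^ (-c)) (-(c * w) * (1 + w * x) ^ (-(c+1))) x := by
  have h0 : 1 + w * x ≠ 0 := by positivity
  have h1 : HasDerivAt (fun x : ℝ => 1 + w * x) w x := by
    simpa using ((hasDerivAt_id x).const_mul w).const_add 1
  convert h1.rpow_const (p := -c) (Or.inl h0) using 1
  rw [show -c - 1 = -(c+1) by ring]; ring

lemma gderivw {w x : ℝ} (hw : 0 < w) (hx : 0 ≤ x) (c : ℝ) :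
    HasDerivAt (fun w : ℝ => (1 + w * x) ^ (-c)) (-(c * x) * (1 + w * x) ^ (-(c+1))) w := by
  have h0 : 1 + w * x ≠ 0 := by positivity
  have h1 : HasDerivAt (fun w : ℝ => 1 + w * x) x w := by
    simpa using ((hasDerivAt_id w).mul_const x).const_add 1
  convert h1.rpow_const (p := -c) (Or.inl h0) using 1
  rw [show -c - 1 = -(c+1) by ring]; ring

lemma subderiv {x : ℝ} (hx : x < 1) (b : ℝ) :
    HasDerivAt (fun x : ℝ => (1 - x) ^ b) (-b * (1 - x) ^ (b - 1)) x := by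
  have h0 : 1 - x ≠ 0 := by linarith
  have h1 : HasDerivAt (fun x : ℝ => 1 - x) (-1) x := by
    simpa using (hasDerivAt_id x).const_sub 1
  convert h1.rpow_const (p := b) (Or.inl h0) using 1
  ring

lemma JJ_rec {s b w c : ℝ} (hs : 0 < s) (hb : -1 < b) (hw : 0 < w) :
    s * JJ b (s - 1) c w - (s + b + 1) * JJ b s c w =
      c * w * (JJ b s (c + 1) w - JJ b (s + 1) (c + 1) w) := by
  have i1 := KK_ii (α := s - 1) (by linarith) hb hw c
  have i2 := KK_ii (α := s) (by linarith) hb hw c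
  have i3 := KK_ii (α := s) (by linarith) hb hw (c+1)
  have i4 := KK_ii (α := s + 1) (by linarith) hb hw (c+1)
  have I := ((i1.const_mul s).sub (i2.const_mul (s+b+1))).sub ((i3.sub i4).const_mul (c * w))
  have F := intervalIntegral.integral_eq_sub_of_hasDerivAt_of_le (zero_le_one (α := ℝ))
    (f := fun x : ℝ => x ^ s * (1 - x) ^ (b + 1) * (1 + w * x) ^ (-c)) ?_ ?_ I
  · rw [intervalIntegral.integral_sub ((i1.const_mul s).sub (i2.const_mul (s+b+1)))
      ((i3.sub i4).const_mul (c * w)),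
      intervalIntegral.integral_sub (i1.const_mul s) (i2.const_mul (s+b+1)),
      intervalIntegral.integral_const_mul, intervalIntegral.integral_const_mul,
      intervalIntegral.integral_const_mul, intervalIntegral.integral_sub i3 i4] at F
    have e1 : b + 1 ≠ 0 := by linarith
    simp only [sub_self, Real.zero_rpow hs.ne', Real.zero_rpow e1] at F
    unfold JJ
    linarith
  · apply ContinuousOn.mul _ (gcont hw c)
    apply Continuous.continuousOn
    apply Continuous.mul
    · exact continuous_id.rpow_const (fun _ => Or.inr hs.le)
    · exact (continuous_const.sub continuous_id).rpow_const (fun _ => Or.inr (by linarith))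
  · intro x hx
    have h1 := Real.hasDerivAt_rpow_const (x := x) (p := s) (Or.inl hx.1.ne')
    have := (h1.mul (subderiv hx.2 (b+1))).mul (gderiv hw hx.1.le c)
    refine HasDerivAt.congr_deriv this ?_
    have h2 : (1:ℝ) - x ≠ 0 := by linarith [hx.2]
    simp only [KK, Pi.mul_apply]
    rw [Real.rpow_add_one h2, Real.rpow_add_one hx.1.ne', add_sub_cancel_right,
      show x ^ s = x ^ (s - 1) * x by
        rw [← Real.rpow_add_one hx.1.ne']; congr 1; ring]
    ring

lemma JJ_deriv {α b w c : ℝ} (hα : -1 < α) (hb : -1 < b) (hw : 0 < w) (hc : 0 < c) :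
    HasDerivAt (JJ b α c) (-c * JJ b (α + 1) (c + 1) w) w := by
  have h := intervalIntegral.hasDerivAt_integral_of_dominated_loc_of_deriv_le
    (μ := volume) (a := 0) (b := 1) (x₀ := w) (s := Set.Ioi 0)
    (F := fun w x => KK b α c w x) (F' := fun w x => x ^ α * (1 - x) ^ b *
      (-(c * x) * (1 + w * x) ^ (-(c+1))))
    (bound := fun x => c * (x ^ α * (1 - x) ^ b)) (Ioi_mem_nhds hw) ?_ (KK_ii hα hb hw c) ?_ ?_
    ((base_ii hα hb).const_mul c) ?_
  · have h2 := h.2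
    have e : ∫ x in (0:ℝ)..1, x ^ α * (1 - x) ^ b * (-(c * x) * (1 + w * x) ^ (-(c+1)))
        = -c * JJ b (α + 1) (c + 1) w := by
      unfold JJ
      rw [← intervalIntegral.integral_const_mul]
      apply int_congr
      intro x hx
      unfold KK
      rw [Real.rpow_add_one hx.1.ne']; ring
    rw [e] at h2
    exact h2
  · filter_upwards [Ioi_mem_nhds hw] with y hy
    exact (intervalIntegrable_iff.1 (KK_ii hα hb hy c)).aestronglyMeasurable
  · apply Measurable.aestronglyMeasurable
    fun_prop
  · filter_upwards with x hx y hy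
    rw [Set.uIoc_of_le zero_le_one] at hx
    have hx0 := hx.1
    have hy0 : 0 < y := hy
    have h1 : 0 ≤ 1 - x := by linarith [hx.2]
    have h3 : (1 + y * x) ^ (-(c+1)) ≤ 1 := by
      apply Real.rpow_le_one_of_one_le_of_nonpos
      · have := mul_pos hy0 hx0; linarith
      · linarith
    have h4 : 0 ≤ (1 + y * x) ^ (-(c+1)) := by positivity
    rw [Real.norm_eq_abs, abs_mul, abs_of_nonneg (by positivity : 0 ≤ x ^ α * (1 - x) ^ b),
      neg_mul, abs_neg, abs_of_nonneg (by positivity), mul_comm c (x ^ α * (1 - x) ^ b)]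
    apply mul_le_mul_of_nonneg_left _ (by positivity)
    calc c * x * (1 + y * x) ^ (-(c+1)) ≤ c * 1 * 1 := by
          gcongr
          exact hx.2
      _ = c := by ring
  · filter_upwards with x hx y hy
    rw [Set.uIoc_of_le zero_le_one] at hx
    exact (gderivw hy hx.1.le c).const_mul _

lemma conv_ineq {w x c : ℝ} (hw : 0 < w) (hx : 0 ≤ x) (hx1 : x ≤ 1) (hc : 0 < c) :
    (1 + w * x) ^ (-c) - (1 + w) ^ (-c) ≤ (1 - x) * (c * w * (1 + w * x) ^ (-(c+1))) := by
  have hA : 0 < 1 + w * x := by positivity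
  have hB : 0 < 1 + w := by positivity
  set r := (1 + w) / (1 + w * x) with hr
  have hr0 : 0 < r := by positivity
  have e1 : 1 + w = (1 + w * x) * r := by rw [hr]; field_simp
  have e2 : (1 + w) ^ (-c) = (1 + w * x) ^ (-c) * r ^ (-c) := by
    rw [e1, Real.mul_rpow hA.le hr0.le]
  have e3 : 1 - c * (r - 1) ≤ r ^ (-c) := by
    rw [Real.rpow_def_of_pos hr0]
    have := Real.add_one_le_exp (Real.log r * -c)
    have h2 := Real.log_le_sub_one_of_pos hr0
    nlinarith
  have e4 : (1 + w * x) ^ (-c) = (1 + w * x) ^ (-(c+1)) * (1 + w * x) := by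
    rw [← Real.rpow_add_one hA.ne']; congr 1; ring
  have e5 : 0 < (1 + w * x) ^ (-c) := by positivity
  have e6 : (1 + w * x) * (r - 1) = w * (1 - x) := by linear_combination -e1
  rw [e2]
  have : (1 + w * x) ^ (-c) * (1 - c * (r - 1)) ≤ (1 + w * x) ^ (-c) * r ^ (-c) := by gcongr
  have e7 : (1 + w * x) ^ (-c) * (c * (r - 1)) = (1 - x) * (c * w * (1 + w * x) ^ (-(c+1))) := by
    rw [e4]; linear_combination (c * (1 + w * x) ^ (-(c+1))) * e6
  linarith

lemma conv_bd {w x c : ℝ} (hw : 0 < w) (hx : 0 ≤ x) (hx1 : x ≤ 1) (hc : 0 < c) :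
    |(1 + w * x) ^ (-c) - (1 + w) ^ (-c)| ≤ (1 - x) * (c * w) := by
  have h1 : (1 + w) ^ (-c) ≤ (1 + w * x) ^ (-c) := by
    apply Real.rpow_le_rpow_of_nonpos (by positivity) _ (by linarith)
    nlinarith
  rw [abs_of_nonneg (by linarith)]
  refine (conv_ineq hw hx hx1 hc).trans ?_
  have h3 : (1 + w * x) ^ (-(c+1)) ≤ 1 := by
    apply Real.rpow_le_one_of_one_le_of_nonpos
    · have := mul_nonneg hw.le hx; linarith
    · linarith
  apply mul_le_mul_of_nonneg_left _ (by linarith)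
  exact mul_le_of_le_one_right (by positivity) h3

lemma JJ_ineq {t b w c : ℝ} (ht : 0 < t) (hb : -1 < b) (hb0 : b < 0) (hw : 0 < w) (hc : 0 < c) :
    (b + 1) * (c * w * JJ b t (c + 1) w) ≤ t * JJ b (t - 1) c w := by
  set G := (1 + w) ^ (-c) with hG
  have hGpos : 0 < G := by positivity
  have i1 := KK_ii (α := t - 1) (by linarith) hb hw c
  have i2 := KK_ii (α := t) (by linarith) hb hw (c+1)
  have i0 := base_ii (α := t - 1) (by linarith) hb
  -- the singular piece
  have i3 : IntervalIntegrable (fun x : ℝ => b * x ^ t * (1 - x) ^ (b - 1) *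
      ((1 + w * x) ^ (-c) - G)) volume 0 1 := by
    have hbase := (base_ii (α := t) (by linarith) hb).const_mul (|b| * (c * w))
    rw [intervalIntegrable_iff_integrableOn_Ioo_of_le zero_le_one] at hbase ⊢
    refine Integrable.mono' hbase ?_ ?_
    · apply Measurable.aestronglyMeasurable
      fun_prop
    · filter_upwards [ae_restrict_mem measurableSet_Ioo] with x hx
      have hx0 := hx.1
      have h1 : 0 < 1 - x := by linarith [hx.2]
      have hbd := conv_bd hw hx.1.le hx.2.le hc
      rw [Real.norm_eq_abs, abs_mul, abs_mul, abs_mul, abs_of_pos (Real.rpow_pos_of_pos hx0 t),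
        abs_of_pos (Real.rpow_pos_of_pos h1 _)]
      calc |b| * x ^ t * (1 - x) ^ (b - 1) * |(1 + w * x) ^ (-c) - G|
          ≤ |b| * x ^ t * (1 - x) ^ (b - 1) * ((1 - x) * (c * w)) := by gcongr
        _ = |b| * (c * w) * (x ^ t * ((1 - x) ^ (b - 1) * (1 - x))) := by ring
        _ = _ := by
          rw [← Real.rpow_add_one h1.ne', sub_add_cancel]
  have I := (((i1.const_mul t).sub (i0.const_mul (t * G))).sub i3).sub (i2.const_mul (c * w))
  have F := intervalIntegral.integral_eq_sub_of_hasDerivAt_of_le (zero_le_one (α := ℝ))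
    (f := fun x : ℝ => x ^ t * (1 - x) ^ b * ((1 + w * x) ^ (-c) - G)) ?_ ?_ I
  · have hz : (∫ x in (0:ℝ)..1, (t * KK b (t - 1) c w x - t * G * (x ^ (t-1) * (1 - x) ^ b)
        - b * x ^ t * (1 - x) ^ (b - 1) * ((1 + w * x) ^ (-c) - G)
        - c * w * KK b t (c + 1) w x)) = 0 := by
      rw [F]
      simp [Real.zero_rpow ht.ne', hG]
    have hT : t * JJ b (t - 1) c w - (b + 1) * (c * w) * JJ b t (c + 1) w
        = ∫ x in (0:ℝ)..1, (t * KK b (t - 1) c w x - (b + 1) * (c * w) * KK b t (c + 1) w x) := by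
      rw [intervalIntegral.integral_sub (i1.const_mul _) (i2.const_mul _),
        intervalIntegral.integral_const_mul, intervalIntegral.integral_const_mul]
      rfl
    have hmono := intervalIntegral.integral_mono_on_of_le_Ioo zero_le_one I
      ((i1.const_mul t).sub (i2.const_mul ((b + 1) * (c * w)))) ?_
    · have hmono' := hz.symm.le.trans hmono
      rw [← hT] at hmono'
      linarith
    · intro x hx
      have hx0 := hx.1
      have h1 : 0 < 1 - x := by linarith [hx.2]
      have hci := conv_ineq hw hx.1.le hx.2.le hc
      rw [← hG] at hci
      have hp : 0 ≤ t * G * (x ^ (t-1) * (1 - x) ^ b) := by positivity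
      have hq : 0 ≤ x ^ t * (1 - x) ^ (b - 1) := by positivity
      have hm := mul_nonneg (mul_nonneg hq (neg_pos.2 hb0).le) (sub_nonneg.2 hci)
      have e : (1 - x) ^ b = (1 - x) ^ (b - 1) * (1 - x) := by
        rw [← Real.rpow_add_one h1.ne', sub_add_cancel]
      have e2 : KK b t (c + 1) w x = x ^ t * (1 - x) ^ (b - 1) * ((1 - x) *
          (1 + w * x) ^ (-(c+1))) := by unfold KK; rw [e]; ring
      simp only [e2]
      nlinarith
  · intro x hx
    rcases eq_or_lt_of_le hx.2 with h | h
    · subst h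
      have hb1 : b + 1 ≠ 0 := by linarith
      unfold ContinuousWithinAt
      have e0 : (1:ℝ) ^ t * (1 - 1) ^ b * ((1 + w * 1) ^ (-c) - G) = 0 := by simp [hG]
      beta_reduce
      rw [e0]
      have hlim : Tendsto (fun x : ℝ => (1 - x) ^ (b + 1) * (c * w))
          (nhdsWithin 1 (Set.Icc 0 1)) (nhds 0) := by
        have : Continuous (fun x : ℝ => (1 - x) ^ (b + 1) * (c * w)) :=
          ((continuous_const.sub continuous_id).rpow_const
            (fun _ => Or.inr (by linarith))).mul continuous_const
        have h2 := this.tendsto 1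
        simp only [sub_self, Real.zero_rpow hb1, zero_mul] at h2
        exact h2.mono_left nhdsWithin_le_nhds
      refine squeeze_zero_norm' ?_ hlim
      filter_upwards [self_mem_nhdsWithin] with y hy
      rcases eq_or_lt_of_le hy.2 with h | h
      · subst h
        rw [e0]; simp [Real.zero_rpow hb1]
      · have h1 : 0 < 1 - y := by linarith
        have hy0 := hy.1
        rw [Real.norm_eq_abs, abs_mul, abs_of_nonneg (by positivity), Real.rpow_add_one h1.ne']
        calc y ^ t * (1 - y) ^ b * |(1 + w * y) ^ (-c) - G|
            ≤ 1 * (1 - y) ^ b * ((1 - y) * (c * w)) := by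
              gcongr
              · exact Real.rpow_le_one hy.1 hy.2 ht.le
              · exact conv_bd hw hy.1 hy.2 hc
          _ = _ := by ring
    · apply ContinuousWithinAt.mul
      · apply ContinuousWithinAt.mul
        · exact (continuous_id.rpow_const (fun _ => Or.inr ht.le)).continuousWithinAt
        · exact (subderiv h b).continuousAt.continuousWithinAt
      · exact (gcont hw c x hx).sub continuousWithinAt_const
  · intro x hx
    have h1 := Real.hasDerivAt_rpow_const (x := x) (p := t) (Or.inl hx.1.ne')
    have := (h1.mul (subderiv hx.2 b)).mul ((gderiv hw hx.1.le c).sub_const G)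
    refine HasDerivAt.congr_deriv this ?_
    simp only [KK, Pi.mul_apply]
    ring

lemma final_alg {s b A B P Q C : ℝ} (hs : 0 < s) (hb : -1 < b) (hb0 : b < 0)
    (hB : 0 < B) (hBA : B ≤ A)
    (h1 : s * A - (s + b + 1) * B = C * (P - Q)) (h2 : (b + 1) * (C * Q) ≤ (s + 1) * B) :
    (s + 1) * b / (b + 1) ≤ 1 - C * Q / B + C * P / A := by
  have hA : 0 < A := by linarith
  have hb1 : 0 < b + 1 := by linarith
  rcases le_total (C * P) (s * A) with h | h
  · have e : 1 - C * Q / B + C * P / A = -b + (s * A - C * P) * (1 / B - 1 / A) := by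
      field_simp
      linear_combination (-A) * h1
    have : 1 / A ≤ 1 / B := one_div_le_one_div_of_le hB hBA
    have h3 := mul_nonneg (sub_nonneg.2 h) (sub_nonneg.2 this)
    have h4 : (s + 1) * b / (b + 1) ≤ 0 :=
      div_nonpos_of_nonpos_of_nonneg (mul_nonpos_of_nonneg_of_nonpos (by linarith) hb0.le) hb1.le
    linarith
  · have h3 : s ≤ C * P / A := by rwa [le_div_iff₀ hA]
    have h4 : C * Q / B ≤ (s + 1) / (b + 1) := by
      rw [div_le_div_iff₀ hB hb1]; linarith
    have e : (s + 1) * b / (b + 1) = 1 + s - (s + 1) / (b + 1) := by field_simp; ring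
    linarith

theorem stmt_14 (p n : ℕ) (hp : 3 ≤ p) (hn : 1 ≤ n) (a b e : ℝ)
    (he : -(p:ℝ)/2 - (n:ℝ)/2 - 1 < e) (ha1 : -(p:ℝ)/2 - 1 < a) (ha2 : a < (n:ℝ)/2 + e)
    (hb1 : -1 < b) (hb2 : b < min ((n:ℝ)/2 + e - a - 1) 0) (φ : ℝ → ℝ)
    (hφ : ∀ w > (0:ℝ), φ w =
      w * (∫ l in (0:ℝ)..1, l ^ ((p:ℝ)/2 + a + 1) * (1 - l) ^ b *
            (1 + w * l) ^ (-((p:ℝ)/2 + (n:ℝ)/2 + e + 2))) /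
          (∫ l in (0:ℝ)..1, l ^ ((p:ℝ)/2 + a) * (1 - l) ^ b *
            (1 + w * l) ^ (-((p:ℝ)/2 + (n:ℝ)/2 + e + 2)))) :
    ∀ w > (0:ℝ), ((p:ℝ)/2 + a + 2) * b / (b + 1) ≤ w * deriv φ w / φ w := by
  intro w hw
  have hb0 : b < 0 := lt_of_lt_of_le hb2 (min_le_right _ _)
  set s := (p:ℝ)/2 + a + 1 with hs
  set c := (p:ℝ)/2 + (n:ℝ)/2 + e + 2 with hc
  have hs0 : 0 < s := by rw [hs]; linarith
  have hc0 : 0 < c := by rw [hc]; linarith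
  have hs1 : (p:ℝ)/2 + a = s - 1 := by rw [hs]; ring
  have hs2 : (p:ℝ)/2 + a + 2 = s + 1 := by rw [hs]; ring
  have hφ' : ∀ w > (0:ℝ), φ w = w * JJ b s c w / JJ b (s - 1) c w := by
    intro w hw
    rw [hφ w hw, hs1]
    rfl
  have hA := JJ_pos (α := s - 1) (by linarith) hb1 hw c
  have hB := JJ_pos (α := s) (by linarith) hb1 hw c
  have hBA := JJ_le (α := s - 1) (by linarith) hb1 hw c
  have dA := JJ_deriv (α := s - 1) (by linarith) hb1 hw hc0
  rw [sub_add_cancel] at hBA dA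
  have dB := JJ_deriv (α := s) (by linarith) hb1 hw hc0
  have dφ : HasDerivAt φ _ w := (((hasDerivAt_id w).mul dB).div dA hA.ne').congr_of_eventuallyEq (by
    filter_upwards [Ioi_mem_nhds hw] with y hy
    exact hφ' y hy)
  have h1 := JJ_rec (c := c) hs0 hb1 hw
  have h2 := JJ_ineq (t := s + 1) (by linarith) hb1 hb0 hw hc0
  rw [add_sub_cancel_right] at h2
  have h3 := final_alg hs0 hb1 hb0 hB hBA h1 h2
  rw [hs2]
  refine h3.trans (le_of_eq ?_)
  rw [dφ.deriv, hφ' w hw]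
  simp only [Pi.mul_apply, id]
  have := hA.ne'
  have := hB.ne'
  have := hw.ne'
  field_simp
  ring
end
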